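/- Let Γ be a connected weighted doubled graph, let F ⊆ E be an op-closed subset that is maximal (with respect to inclusion) among op-closed loop-trivial subsets of E, and fix a base vertex ∗ ∈ V. Then there exists a unique function φ : V → ℝ with φ(v) > 0 for all v, φ(∗) = 1, and φ(t(e)) = μ(e)·φ(s(e)) for every e ∈ F. In particular, for every path σ in F with source v and target w one has φ(w) = μ(σ)·φ(v), and for any other choice of base vertex ∗′ the resulting function φ′ satisfies φ′ = φ(∗′)⁻¹·φ, so that up to a positive scaling φ is independent of the base vertex. -/

import Mathlib

/-- A weighted doubled graph: finite vertex set `V`, finite edge set `E`,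
source and target maps, an edge involution `op` reversing direction, and a
positive edge weighting `μ` with `μ (op e) = (μ e)⁻¹`. -/
structure WDGraph (V E : Type) [Fintype V] [Fintype E] where
  s : E → V
  t : E → V
  op : E → E
  op_op : ∀ e, op (op e) = e
  s_op : ∀ e, s (op e) = t e
  t_op : ∀ e, t (op e) = s e
  μ : E → ℝ
  μ_pos : ∀ e, 0 < μ e
  μ_op : ∀ e, μ (op e) = (μ e)⁻¹

namespace WDGraph

variable {V E : Type} [Fintype V] [Fintype E]

/-- A path in a weighted doubled graph: a nonempty list of consecutively
composable edges. -/
structure Path (G : WDGraph V E) where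
  edges : List E
  ne : edges ≠ []
  chain : edges.Chain' (fun a b => G.t a = G.s b)

variable {G : WDGraph V E}

/-- The source of a path: the source of its first edge. -/
def Path.source (p : G.Path) : V := G.s (p.edges.head p.ne)

/-- The target of a path: the target of its last edge. -/
def Path.target (p : G.Path) : V := G.t (p.edges.getLast p.ne)

/-- The weight of a path: the product of the weights of its edges. -/
def Path.weight (p : G.Path) : ℝ := (p.edges.map G.μ).prod

/-- A loop is a path whose source equals its target. -/
def Path.IsLoop (p : G.Path) : Prop := p.source = p.target

/-- A graph is connected if any two distinct vertices are joined by a path. -/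
def Connected (G : WDGraph V E) : Prop :=
  ∀ v w : V, v ≠ w → ∃ p : G.Path, p.source = v ∧ p.target = w

/-- A set of edges is `op`-closed if it is stable under the edge involution. -/
def OpClosed (G : WDGraph V E) (F : Set E) : Prop := ∀ e ∈ F, G.op e ∈ F

/-- A set of edges is loop-trivial if every loop all of whose edges lie in it
has weight `1`. -/
def LoopTrivial (G : WDGraph V E) (F : Set E) : Prop :=
  ∀ p : G.Path, (∀ e ∈ p.edges, e ∈ F) → p.IsLoop → p.weight = 1

end WDGraph

namespace WDGraph

/-- Walks (possibly empty) in `F` with their weights. -/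
inductive Wk {V E : Type} [Fintype V] [Fintype E] (G : WDGraph V E) (F : Set E) :
    V → V → ℝ → Prop
  | nil (v : V) : Wk G F v v 1
  | snoc (v : V) (e : E) (r : ℝ) : Wk G F v (G.s e) r → e ∈ F → Wk G F v (G.t e) (r * G.μ e)

section
variable {V E : Type} [Fintype V] [Fintype E] {G : WDGraph V E} {F : Set E}

theorem Wk.trans {u v w : V} {a b : ℝ} (h : Wk G F u v a) (k : Wk G F v w b) :
    Wk G F u w (a * b) := by
  induction k with
  | nil => simpa using h
  | snoc e r _ he ih => rw [← mul_assoc]; exact Wk.snoc _ _ _ ih he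

theorem Wk.single {e : E} (he : e ∈ F) : Wk G F (G.s e) (G.t e) (G.μ e) := by
  simpa using Wk.snoc _ _ _ (Wk.nil (G := G) (F := F) (G.s e)) he

theorem Wk.symm (hF : G.OpClosed F) {u v : V} {a : ℝ} (h : Wk G F u v a) :
    Wk G F v u a⁻¹ := by
  induction h with
  | nil => simpa using Wk.nil _
  | snoc e r _ he ih =>
    have h1 := Wk.single (G := G) (hF e he)
    rw [G.s_op, G.t_op, G.μ_op] at h1
    rw [mul_inv, mul_comm]
    exact h1.trans ih

theorem Wk.pos {u v : V} {a : ℝ} (h : Wk G F u v a) : 0 < a := by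
  induction h with
  | nil => exact one_pos
  | snoc e r _ he ih => exact mul_pos ih (G.μ_pos e)

theorem Wk.toPath {u v : V} {a : ℝ} (h : Wk G F u v a) :
    (u = v ∧ a = 1) ∨ ∃ p : G.Path, (∀ e ∈ p.edges, e ∈ F) ∧ p.source = u ∧ p.target = v ∧
      p.weight = a := by
  induction h with
  | nil => exact Or.inl ⟨rfl, rfl⟩
  | snoc e r _ he ih =>
    right
    rcases ih with ⟨h1, h2⟩ | ⟨p, hp, hs, ht, hw⟩
    · refine ⟨⟨[e], by simp, List.isChain_singleton _⟩, by simpa using he, ?_, ?_, ?_⟩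
      · simp [Path.source, h1]
      · simp [Path.target]
      · simp [Path.weight, h2]
    · refine ⟨⟨p.edges ++ [e], by simp, ?_⟩, ?_, ?_, ?_, ?_⟩
      · refine List.isChain_append.2 ⟨p.chain, List.isChain_singleton _, ?_⟩
        intro x hx y hy
        rw [List.getLast?_eq_some_getLast p.ne] at hx
        simp at hx hy
        subst hx; subst hy
        exact ht
      · intro x hx
        simp at hx
        rcases hx with hx | rfl
        · exact hp x hx
        · exact he
      · simp only [Path.source]
        rw [List.head_append_of_ne_nil p.ne]
        exact hs
      · simp [Path.target]
      · simp only [Path.weight] at hw ⊢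
        simp [hw]

theorem Wk.uniq (hF : G.OpClosed F) (hT : G.LoopTrivial F) {u v : V} {a b : ℝ}
    (h : Wk G F u v a) (k : Wk G F u v b) : a = b := by
  have hl := h.trans (k.symm hF)
  have : a * b⁻¹ = 1 := by
    rcases hl.toPath with ⟨_, h2⟩ | ⟨p, hp, hs, ht, hw⟩
    · exact h2
    · rw [← hw]; exact hT p hp (hs.trans ht.symm)
  have hb := k.pos
  field_simp at this
  exact this

theorem list_mul {φ : V → ℝ} (hφ : ∀ e ∈ F, φ (G.t e) = G.μ e * φ (G.s e)) (l : List E) :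
    ∀ e : E, (e :: l).IsChain (fun a b => G.t a = G.s b) → (∀ x ∈ e :: l, x ∈ F) →
    φ (G.t ((e :: l).getLast (by simp))) = ((e :: l).map G.μ).prod * φ (G.s e) := by
  induction l with
  | nil => intro e _ h; simpa using hφ e (h e (by simp))
  | cons b l ih =>
    intro e hc h
    rw [List.isChain_cons_cons] at hc
    have := ih b hc.2 (fun x hx => h x (by simp at hx ⊢; tauto))
    rw [List.getLast_cons (by simp), this, ← hc.1, hφ e (h e (by simp)), List.map_cons (a := e),
      List.prod_cons]
    ring

theorem path_mul {φ : V → ℝ} (hφ : ∀ e ∈ F, φ (G.t e) = G.μ e * φ (G.s e)) (p : G.Path)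
    (hp : ∀ e ∈ p.edges, e ∈ F) : φ p.target = p.weight * φ p.source := by
  obtain ⟨l, hne, hc⟩ := p
  cases l with
  | nil => exact absurd rfl hne
  | cons e l => exact list_mul hφ l e hc hp

theorem list_closed {C : V → Prop} (hC : ∀ e, C (G.s e) → C (G.t e)) (l : List E) :
    ∀ e : E, (e :: l).IsChain (fun a b => G.t a = G.s b) → C (G.s e) →
    C (G.t ((e :: l).getLast (by simp))) := by
  induction l with
  | nil => intro e _ h; simpa using hC e h
  | cons b l ih =>
    intro e hc h
    rw [List.isChain_cons_cons] at hc
    rw [List.getLast_cons (by simp)]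
    exact ih b hc.2 (hc.1 ▸ hC e h)

theorem path_closed {C : V → Prop} (hC : ∀ e, C (G.s e) → C (G.t e)) (p : G.Path)
    (hp : C p.source) : C p.target := by
  obtain ⟨l, hne, hc⟩ := p
  cases l with
  | nil => exact absurd rfl hne
  | cons e l => exact list_closed hC l e hc hp

/-- The edges compatible with a positive potential form an op-closed set. -/
theorem pot_op (φ : V → ℝ) :
    G.OpClosed {e | φ (G.t e) = G.μ e * φ (G.s e)} := by
  intro e he
  have := G.μ_pos e
  simp only [Set.mem_setOf_eq, G.s_op, G.t_op, G.μ_op] at he ⊢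
  rw [he]; field_simp

theorem pot_triv (φ : V → ℝ) (hpos : ∀ v, 0 < φ v) :
    G.LoopTrivial {e | φ (G.t e) = G.μ e * φ (G.s e)} := by
  intro p hp hl
  have h := path_mul (φ := φ) (fun e he => he) p hp
  rw [← show p.source = p.target from hl] at h
  have := hpos p.source
  exact (mul_right_cancel₀ this.ne' (by rw [one_mul]; exact h)).symm

theorem exists_pot (hF : G.OpClosed F) (hT : G.LoopTrivial F) :
    ∃ φ : V → ℝ, (∀ v, 0 < φ v) ∧ ∀ e ∈ F, φ (G.t e) = G.μ e * φ (G.s e) := by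
  let S : Setoid V :=
    { r := fun u v => ∃ a, Wk G F u v a
      iseqv := ⟨fun v => ⟨1, Wk.nil v⟩, fun ⟨a, h⟩ => ⟨_, h.symm hF⟩,
        fun ⟨a, h⟩ ⟨b, k⟩ => ⟨_, h.trans k⟩⟩ }
  have key : ∀ v, ∃ a, Wk G F (Quotient.out (Quotient.mk S v)) v a := fun v =>
    Quotient.mk_out (s := S) v
  choose φ hφ using key
  refine ⟨φ, fun v => (hφ v).pos, fun e he => ?_⟩
  have hq : Quotient.mk S (G.s e) = Quotient.mk S (G.t e) :=
    Quotient.sound ⟨_, Wk.single he⟩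
  have h1 := hφ (G.t e)
  rw [← hq] at h1
  rw [mul_comm]
  exact h1.uniq hF hT (Wk.snoc _ _ _ (hφ (G.s e)) he)

theorem reach (hconn : G.Connected) (hF : G.OpClosed F) (hT : G.LoopTrivial F)
    (hmax : ∀ F' : Set E, G.OpClosed F' → G.LoopTrivial F' → F ⊆ F' → F = F')
    (u v : V) : ∃ a, Wk G F u v a := by
  classical
  by_cases huv : u = v
  · subst huv; exact ⟨1, Wk.nil _⟩
  obtain ⟨p, hs, ht⟩ := hconn u v huv
  rw [← ht]
  refine path_closed (C := fun w => ∃ a, Wk G F u w a) ?_ p (by rw [hs]; exact ⟨1, Wk.nil _⟩)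
  rintro e ⟨a, ha⟩
  by_contra hne
  obtain ⟨φ, hpos, hφ⟩ := exists_pot hF hT
  let C : V → Prop := fun w => ∃ a, Wk G F u w a
  let c : ℝ := G.μ e * φ (G.s e) / φ (G.t e)
  have hc : 0 < c := div_pos (mul_pos (G.μ_pos e) (hpos _)) (hpos _)
  let ψ : V → ℝ := fun w => if C w then φ w else c * φ w
  have hψ : ∀ w, 0 < ψ w := by
    intro w
    by_cases h : C w
    · simp [ψ, h, hpos]
    · simp [ψ, h, hpos, hc]
  have hFe := hmax _ (pot_op ψ) (pot_triv ψ hψ) (by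
    intro x hx
    have hiff : C (G.t x) ↔ C (G.s x) :=
      ⟨fun ⟨a, h⟩ => ⟨_, h.trans ((Wk.single hx).symm hF)⟩, fun ⟨a, h⟩ => ⟨_, Wk.snoc _ _ _ h hx⟩⟩
    have := hφ x hx
    by_cases h : C (G.s x)
    · simp [ψ, hiff, h, this]
    · simp [ψ, hiff, h, this]; ring)
  have heF : e ∈ F := by
    rw [hFe]
    have h1 : C (G.s e) := ⟨a, ha⟩
    have h2 : ¬ C (G.t e) := hne
    have := hpos (G.t e)
    simp only [Set.mem_setOf_eq, ψ, h1, h2, if_true, if_false, c]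
    field_simp
  exact hne ⟨_, Wk.snoc _ _ _ ha heF⟩

theorem Wk.mul {φ : V → ℝ} (hφ : ∀ e ∈ F, φ (G.t e) = G.μ e * φ (G.s e)) {u v : V} {a : ℝ}
    (h : Wk G F u v a) : φ v = a * φ u := by
  induction h with
  | nil => simp
  | snoc e r _ he ih => rw [hφ e he, ih]; ring

end

end WDGraph

open WDGraph in
/-- Given a connected weighted doubled graph, a maximal
`op`-closed loop-trivial set of edges `F`, and a base vertex `∗`, there is a
unique positive function `φ : V → ℝ` with `φ ∗ = 1` and
`φ (t e) = μ e * φ (s e)` for all `e ∈ F`.  Moreover `φ` transforms paths in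
`F` by their weights, and changing the base vertex rescales `φ` by a positive
constant. -/
theorem exists_unique_vertex_functional
    {V E : Type} [Fintype V] [Fintype E] (G : WDGraph V E)
    (hconn : G.Connected) (F : Set E)
    (hFop : G.OpClosed F) (hFtriv : G.LoopTrivial F)
    (hmax : ∀ F' : Set E, G.OpClosed F' → G.LoopTrivial F' → F ⊆ F' → F = F')
    (star : V) :
    (∃! φ : V → ℝ, (∀ v, 0 < φ v) ∧ φ star = 1 ∧
        ∀ e ∈ F, φ (G.t e) = G.μ e * φ (G.s e)) ∧
    (∀ φ : V → ℝ,
      ((∀ v, 0 < φ v) ∧ φ star = 1 ∧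
        ∀ e ∈ F, φ (G.t e) = G.μ e * φ (G.s e)) →
      ((∀ p : G.Path, (∀ e ∈ p.edges, e ∈ F) →
          φ p.target = p.weight * φ p.source) ∧
       (∀ star' : V, ∀ φ' : V → ℝ,
          ((∀ v, 0 < φ' v) ∧ φ' star' = 1 ∧
            ∀ e ∈ F, φ' (G.t e) = G.μ e * φ' (G.s e)) →
          φ' = fun v => (φ star')⁻¹ * φ v))) := by
  have hr := reach hconn hFop hFtriv hmax
  have cmp : ∀ φ : V → ℝ, ((∀ v, 0 < φ v) ∧ φ star = 1 ∧
        ∀ e ∈ F, φ (G.t e) = G.μ e * φ (G.s e)) → ∀ star' : V, ∀ φ' : V → ℝ,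
          ((∀ v, 0 < φ' v) ∧ φ' star' = 1 ∧
            ∀ e ∈ F, φ' (G.t e) = G.μ e * φ' (G.s e)) →
          φ' = fun v => (φ star')⁻¹ * φ v := by
    rintro φ ⟨hp, _, h⟩ star' φ' ⟨_, h1', h'⟩
    funext v
    obtain ⟨a, ha⟩ := hr star' v
    have := hp star'
    rw [ha.mul h, ha.mul h', h1']
    field_simp
  refine ⟨?_, fun φ hφ => ⟨fun p hp => path_mul hφ.2.2 p hp, cmp φ hφ⟩⟩
  obtain ⟨φ, hp, h⟩ := exists_pot hFop hFtriv
  have h0 := hp star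
  refine ⟨fun v => (φ star)⁻¹ * φ v, ⟨fun v => mul_pos (inv_pos.2 h0) (hp v),
    inv_mul_cancel₀ h0.ne', fun e he => ?_⟩, ?_⟩
  · simp only [h e he]; ring
  · intro ψ hψ
    have := cmp ψ hψ star _ ⟨fun v => mul_pos (inv_pos.2 h0) (hp v),
      inv_mul_cancel₀ h0.ne', fun e he => by simp only [h e he]; ring⟩
    rw [this]
    funext v
    simp [hψ.2.1]
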